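/- Let V be a real vector space with finrank V = 2, Q a quadratic form on V, and A, B, C, X elements of the Clifford algebra Cl(Q). If A·X − X·B = C, then D·X = A·C − C·B̄, where B̄ := involute (reverse B) and D := A² − A·(B + B̄) + B·B̄. -/

import Mathlib

open CliffordAlgebra

theorem CliffordAlgebra.exists_eq_combination_of_finrank_eq_two {V : Type*} [AddCommGroup V]
    [Module ℝ V] (hV : Module.finrank ℝ V = 2) (Q : QuadraticForm ℝ V) :
    ∃ u v : V, ∀ B : CliffordAlgebra Q, ∃ a b c d : ℝ,
      B = a • 1 + b • ι Q u + c • ι Q v + d • (ι Q u * ι Q v) := by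
  have : Module.Finite ℝ V := Module.finite_of_finrank_eq_succ hV
  let basis := Module.finBasisOfFinrankEq ℝ V hV
  refine ⟨basis 0, basis 1, fun B => ?_⟩
  set e := ι Q (basis 0)
  set f := ι Q (basis 1)
  have hee : e * e = Q (basis 0) • 1 := by
    rw [ι_sq_scalar, Algebra.algebraMap_eq_smul_one]
  have hff : f * f = Q (basis 1) • 1 := by
    rw [ι_sq_scalar, Algebra.algebraMap_eq_smul_one]
  have hfe : f * e = QuadraticMap.polar Q (basis 1) (basis 0) • 1 - e * f := by
    rw [eq_sub_iff_add_eq, ι_mul_ι_add_swap, Algebra.algebraMap_eq_smul_one]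
  have heef : e * (e * f) = Q (basis 0) • f := by
    rw [← mul_assoc, hee, smul_one_mul]
  have hfef : f * (e * f) = QuadraticMap.polar Q (basis 1) (basis 0) • f - Q (basis 1) • e := by
    rw [← mul_assoc, hfe, sub_mul, mul_assoc, hff, smul_one_mul, mul_smul_one]
  induction B using CliffordAlgebra.left_induction with
  | algebraMap r => exact ⟨r, 0, 0, 0, by simp [Algebra.algebraMap_eq_smul_one]⟩
  | add x y hx hy =>
    obtain ⟨a, b, c, d, rfl⟩ := hx
    obtain ⟨a', b', c', d', rfl⟩ := hy
    exact ⟨a + a', b + b', c + c', d + d', by module⟩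
  | ι_mul x m hx =>
    obtain ⟨a, b, c, d, rfl⟩ := hx
    have hm : ι Q m = basis.repr m 0 • e + basis.repr m 1 • f := by
      conv_lhs => rw [← basis.sum_repr m, Fin.sum_univ_two, map_add, map_smul, map_smul]
    generalize basis.repr m 0 = x at hm
    generalize basis.repr m 1 = y at hm
    rw [hm]
    refine ⟨x * b * Q (basis 0) + y * c * Q (basis 1)
        + y * b * QuadraticMap.polar Q (basis 1) (basis 0),
      x * a - y * d * Q (basis 1),
      y * a + x * d * Q (basis 0) + y * d * QuadraticMap.polar Q (basis 1) (basis 0),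
      x * c - y * b, ?_⟩
    simp only [add_mul, mul_add, smul_mul_assoc, mul_smul_comm, mul_one, hee, hff, hfe, heef, hfef]
    module

theorem CliffordAlgebra.exists_add_and_mul_conj_eq_algebraMap {V : Type*} [AddCommGroup V]
    [Module ℝ V] (hV : Module.finrank ℝ V = 2) (Q : QuadraticForm ℝ V) (B : CliffordAlgebra Q) :
    (∃ s : ℝ, B + involute (reverse B) = algebraMap ℝ _ s) ∧
      ∃ n : ℝ, B * involute (reverse B) = algebraMap ℝ _ n := by
  obtain ⟨u, v, h⟩ := exists_eq_combination_of_finrank_eq_two hV Q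
  obtain ⟨a, b, c, d, rfl⟩ := h B
  have hconj : involute (reverse (a • 1 + b • ι Q u + c • ι Q v + d • (ι Q u * ι Q v))) =
      a • 1 - b • ι Q u - c • ι Q v + d • (ι Q v * ι Q u) := by
    simp only [map_add, map_smul, reverse.map_one, reverse.map_mul, reverse_ι, map_one, map_mul,
      involute_ι, neg_mul_neg]
    module
  rw [hconj]
  simp only [Algebra.algebraMap_eq_smul_one]
  have huu : ι Q u * ι Q u = Q u • 1 := by
    rw [ι_sq_scalar, Algebra.algebraMap_eq_smul_one]
  have hvv : ι Q v * ι Q v = Q v • 1 := by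
    rw [ι_sq_scalar, Algebra.algebraMap_eq_smul_one]
  have hvu : ι Q v * ι Q u = QuadraticMap.polar Q v u • 1 - ι Q u * ι Q v := by
    rw [eq_sub_iff_add_eq, ι_mul_ι_add_swap, Algebra.algebraMap_eq_smul_one]
  have huuv : ι Q u * (ι Q u * ι Q v) = Q u • ι Q v := by
    rw [← mul_assoc, huu, smul_one_mul]
  have hvuv : ι Q v * (ι Q u * ι Q v) = QuadraticMap.polar Q v u • ι Q v - Q v • ι Q u := by
    rw [← mul_assoc, hvu, sub_mul, mul_assoc, hvv, smul_one_mul, mul_smul_one]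
  refine ⟨⟨2 * a + d * QuadraticMap.polar Q v u, by rw [hvu]; module⟩,
    a ^ 2 + a * d * QuadraticMap.polar Q v u - b ^ 2 * Q u - c ^ 2 * Q v
      - b * c * QuadraticMap.polar Q v u + d ^ 2 * (Q u * Q v), ?_⟩
  simp only [add_mul, mul_add, mul_sub, smul_mul_assoc, mul_smul_comm, mul_one, one_mul,
    mul_assoc, huu, hvv, hvu, huuv, hvuv]
  module

theorem stmt_10 (V : Type*) [AddCommGroup V] [Module ℝ V]
    (hV : Module.finrank ℝ V = 2) (Q : QuadraticForm ℝ V)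
    (A B C X : CliffordAlgebra Q)
    (h : A * X - X * B = C) :
    (A ^ 2 - A * (B + involute (reverse B)) + B * involute (reverse B)) * X =
      A * C - C * involute (reverse B) := by
  obtain ⟨⟨s, hs⟩, n, hn⟩ := exists_add_and_mul_conj_eq_algebraMap hV Q B
  have hsX : (B + involute (reverse B)) * X = X * (B + involute (reverse B)) := by
    rw [hs, Algebra.commutes]
  have hnX : B * involute (reverse B) * X = X * (B * involute (reverse B)) := by
    rw [hn, Algebra.commutes]
  rw [add_mul, sub_mul, mul_assoc A, hsX, hnX, ← h]
  noncomm_ring
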